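/- Let (B₁, B₀) be a Rota-Baxter operator on a crossed module of Lie algebras (h, g, dt, φ) over ℝ. Define [u, v]_{B₁} = [B₁(u), v] + [u, B₁(v)] + [u, v] on h, [x, y]_{B₀} = [B₀(x), y] + [x, B₀(y)] + [x, y] on g, and φ̂(x)(u) = φ(x)(B₁(u)) + φ(B₀(x))(u) + φ(x)(u). Then for all x, y ∈ g and u, v ∈ h: (1) φ̂([x, y]_{B₀})(u) = φ̂(x)(φ̂(y)(u)) − φ̂(y)(φ̂(x)(u)); (2) φ̂(x)([u, v]_{B₁}) = [φ̂(x)(u), v]_{B₁} + [u, φ̂(x)(v)]_{B₁}. -/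

import Mathlib

/-- A crossed module of Lie algebras over ℝ: `dt : h → g` a Lie algebra homomorphism and
`φ : g → Der(h)` a Lie algebra homomorphism into derivations, with equivariance and the
Peiffer identity. -/
structure IsLieCrossedModule {h g : Type*}
    [LieRing h] [LieAlgebra ℝ h] [LieRing g] [LieAlgebra ℝ g]
    (dt : h →ₗ[ℝ] g) (φ : g →ₗ[ℝ] Module.End ℝ h) : Prop where
  dt_bracket : ∀ u v : h, dt ⁅u, v⁆ = ⁅dt u, dt v⁆
  φ_deriv : ∀ (x : g) (u v : h), φ x ⁅u, v⁆ = ⁅φ x u, v⁆ + ⁅u, φ x v⁆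
  φ_hom : ∀ (x y : g) (u : h), φ ⁅x, y⁆ u = φ x (φ y u) - φ y (φ x u)
  equivar : ∀ (x : g) (u : h), dt (φ x u) = ⁅x, dt u⁆
  peiffer : ∀ u v : h, φ (dt u) v = ⁅u, v⁆

/-- Rota-Baxter operator of weight 1 on a Lie algebra. -/
def IsRotaBaxterLie {g : Type*} [LieRing g] [LieAlgebra ℝ g] (B : g →ₗ[ℝ] g) : Prop :=
  ∀ x y : g, ⁅B x, B y⁆ = B (⁅B x, y⁆ + ⁅x, B y⁆ + ⁅x, y⁆)

/-- Rota-Baxter operator on a crossed module of Lie algebras. -/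
structure IsLieCMRotaBaxter {h g : Type*}
    [LieRing h] [LieAlgebra ℝ h] [LieRing g] [LieAlgebra ℝ g]
    (dt : h →ₗ[ℝ] g) (φ : g →ₗ[ℝ] Module.End ℝ h)
    (B₁ : h →ₗ[ℝ] h) (B₀ : g →ₗ[ℝ] g) : Prop where
  rb₁ : IsRotaBaxterLie B₁
  rb₀ : IsRotaBaxterLie B₀
  comm : ∀ u : h, dt (B₁ u) = B₀ (dt u)
  compat : ∀ (x : g) (u : h),
    φ (B₀ x) (B₁ u) = B₁ (φ x (B₁ u) + φ (B₀ x) u + φ x u)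

/-- The descended bracket `[u,v]_B = [B u, v] + [u, B v] + [u, v]`. -/
def brB {l : Type*} [LieRing l] [LieAlgebra ℝ l] (B : l →ₗ[ℝ] l) (u v : l) : l :=
  ⁅B u, v⁆ + ⁅u, B v⁆ + ⁅u, v⁆

/-- The descended action `φ̂(x)(u) = φ(x)(B₁ u) + φ(B₀ x)(u) + φ(x)(u)`. -/
def hatphiL {h g : Type*} [LieRing h] [LieAlgebra ℝ h] [LieRing g] [LieAlgebra ℝ g]
    (φ : g →ₗ[ℝ] Module.End ℝ h) (B₁ : h →ₗ[ℝ] h) (B₀ : g →ₗ[ℝ] g)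
    (x : g) (u : h) : h :=
  φ x (B₁ u) + φ (B₀ x) u + φ x u

/-! A pair of Rota-Baxter operators `(B₁, B₀)` compatible with an action of `L` on `K` by
derivations is the same thing as a Rota-Baxter operator `B` on the semidirect sum `K ⋊ L` preserving
the two summands. The descended bracket `⁅·, ·⁆_B` satisfies the Jacobi identity, because `B` turns
it into the original bracket, and `⁅x, u⁆_B = φ̂(x)(u)` for `x ∈ L` and `u ∈ K`. So both claims are
instances of the Jacobi identity of `⁅·, ·⁆_B`, for triples `(x, y, u)` and `(x, u, v)`
respectively. -/

section RotaBaxter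

variable {R L : Type*} [CommRing R] [LieRing L] [LieAlgebra R L]

/-- The descended bracket of a linear endomorphism `B` of a Lie algebra, with weight `c`; it is the
bracket of a second Lie algebra structure when `B` is a Rota-Baxter operator of weight `c`. -/
def descendedBracket (c : R) (B : L →ₗ[R] L) (x y : L) : L :=
  ⁅B x, y⁆ + ⁅x, B y⁆ + c • ⁅x, y⁆

/-- Rota-Baxter operators of weight `c` on a Lie algebra over a commutative ring, phrased as the
linear maps that carry the descended bracket to the original one. -/
def IsRotaBaxter (c : R) (B : L →ₗ[R] L) : Prop :=
  ∀ x y : L, B (descendedBracket c B x y) = ⁅B x, B y⁆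

theorem IsRotaBaxter.leibniz_descendedBracket {c : R} {B : L →ₗ[R] L} (hB : IsRotaBaxter c B)
    (x y z : L) :
    descendedBracket c B x (descendedBracket c B y z) =
      descendedBracket c B (descendedBracket c B x y) z +
        descendedBracket c B y (descendedBracket c B x z) := by
  have nested_left (a b d : L) : descendedBracket c B (descendedBracket c B a b) d =
      ⁅⁅B a, B b⁆, d⁆ + ⁅descendedBracket c B a b, B d⁆ + c • ⁅descendedBracket c B a b, d⁆ := by
    rw [descendedBracket, hB]
  have nested_right (a b d : L) : descendedBracket c B a (descendedBracket c B b d) =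
      ⁅B a, descendedBracket c B b d⁆ + ⁅a, ⁅B b, B d⁆⁆ + c • ⁅a, descendedBracket c B b d⁆ := by
    rw [descendedBracket, hB]
  rw [nested_right, nested_left, nested_right]
  simp only [descendedBracket, lie_add, add_lie, lie_smul, smul_lie, smul_add, lie_lie, smul_sub]
  abel

end RotaBaxter

section SemiDirectSum

open LieAlgebra LieAlgebra.SemiDirectSum

variable {R K L : Type*} [CommRing R] [LieRing K] [LieAlgebra R K] [LieRing L] [LieAlgebra R L]
  (c : R) (ψ : L →ₗ⁅R⁆ LieDerivation R K K) (B₁ : K →ₗ[R] K) (B₀ : L →ₗ[R] L)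

/-- The descended action of weight `c`: the map `φ̂` attached to an action `ψ` by derivations and a
pair of linear endomorphisms. -/
def descendedAction (x : L) (u : K) : K :=
  ψ x (B₁ u) + ψ (B₀ x) u + c • ψ x u

/-- The endomorphism `B₁ × B₀` of the underlying module of the semidirect sum, through which a pair
of operators is treated as a single one. -/
def semiDirectMap : (K ⋊⁅ψ⁆ L) →ₗ[R] K ⋊⁅ψ⁆ L :=
  (toProdl ψ).symm.conj (B₁.prodMap B₀)

theorem semiDirectMap_apply (z : K ⋊⁅ψ⁆ L) :
    semiDirectMap ψ B₁ B₀ z = ⟨B₁ z.left, B₀ z.right⟩ :=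
  rfl

theorem descendedBracket_semiDirectMap (z w : K ⋊⁅ψ⁆ L) :
    descendedBracket c (semiDirectMap ψ B₁ B₀) z w =
      ⟨descendedBracket c B₁ z.left w.left + descendedAction c ψ B₁ B₀ z.right w.left -
          descendedAction c ψ B₁ B₀ w.right z.left,
        descendedBracket c B₀ z.right w.right⟩ := by
  simp only [descendedBracket, descendedAction, semiDirectMap_apply, lie_eq_mk, add_eq_mk,
    smul_eq_mk, smul_add, smul_sub, SemiDirectSum.mk.injEq, and_true]
  abel

theorem descendedBracket_inr_inr (x y : L) :
    descendedBracket c (semiDirectMap ψ B₁ B₀) (inr ψ x) (inr ψ y) =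
      inr ψ (descendedBracket c B₀ x y) := by
  simp [descendedBracket, semiDirectMap_apply]

theorem descendedBracket_inr_inl (x : L) (u : K) :
    descendedBracket c (semiDirectMap ψ B₁ B₀) (inr ψ x) (inl ψ u) =
      inl ψ (descendedAction c ψ B₁ B₀ x u) := by
  simp [descendedBracket, descendedAction, semiDirectMap_apply, add_comm]

theorem descendedBracket_inl_inl (u v : K) :
    descendedBracket c (semiDirectMap ψ B₁ B₀) (inl ψ u) (inl ψ v) =
      inl ψ (descendedBracket c B₁ u v) := by
  simp [descendedBracket, semiDirectMap_apply]

variable {c ψ B₁ B₀}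

theorem IsRotaBaxter.semiDirectMap (hB₁ : IsRotaBaxter c B₁) (hB₀ : IsRotaBaxter c B₀)
    (hψ : ∀ x u, B₁ (descendedAction c ψ B₁ B₀ x u) = ψ (B₀ x) (B₁ u)) :
    IsRotaBaxter c (semiDirectMap ψ B₁ B₀) := by
  intro z w
  simp only [descendedBracket_semiDirectMap, semiDirectMap_apply, lie_eq_mk, map_add, map_sub,
    hB₁ _ _, hB₀ _ _, hψ]

theorem stmt15_general (hB₁ : IsRotaBaxter c B₁) (hB₀ : IsRotaBaxter c B₀)
    (hψ : ∀ x u, B₁ (descendedAction c ψ B₁ B₀ x u) = ψ (B₀ x) (B₁ u)) :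
    (∀ (x y : L) (u : K),
      descendedAction c ψ B₁ B₀ (descendedBracket c B₀ x y) u =
        descendedAction c ψ B₁ B₀ x (descendedAction c ψ B₁ B₀ y u) -
          descendedAction c ψ B₁ B₀ y (descendedAction c ψ B₁ B₀ x u)) ∧
    (∀ (x : L) (u v : K),
      descendedAction c ψ B₁ B₀ x (descendedBracket c B₁ u v) =
        descendedBracket c B₁ (descendedAction c ψ B₁ B₀ x u) v +
          descendedBracket c B₁ u (descendedAction c ψ B₁ B₀ x v)) := by
  have leibniz := (hB₁.semiDirectMap hB₀ hψ).leibniz_descendedBracket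
  refine ⟨fun x y u ↦ eq_sub_of_add_eq ?_, fun x u v ↦ ?_⟩
  · have h := leibniz (inr ψ x) (inr ψ y) (inl ψ u)
    simp only [descendedBracket_inr_inr, descendedBracket_inr_inl, ← map_add] at h
    exact (inl_injective ψ h).symm
  · have h := leibniz (inr ψ x) (inl ψ u) (inl ψ v)
    simp only [descendedBracket_inl_inl, descendedBracket_inr_inl, ← map_add] at h
    exact inl_injective ψ h

end SemiDirectSum

theorem brB_eq_descendedBracket {l : Type*} [LieRing l] [LieAlgebra ℝ l] (B : l →ₗ[ℝ] l) :
    brB B = descendedBracket 1 B := by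
  funext x y
  rw [brB, descendedBracket, one_smul]

theorem IsRotaBaxterLie.isRotaBaxter {l : Type*} [LieRing l] [LieAlgebra ℝ l] {B : l →ₗ[ℝ] l}
    (hB : IsRotaBaxterLie B) : IsRotaBaxter 1 B := by
  intro x y
  rw [← brB_eq_descendedBracket]
  exact (hB x y).symm

section CrossedModule

variable {h g : Type*} [LieRing h] [LieAlgebra ℝ h] [LieRing g] [LieAlgebra ℝ g]
  {dt : h →ₗ[ℝ] g} {φ : g →ₗ[ℝ] Module.End ℝ h}

/-- The action of a crossed module, bundled as a homomorphism into the Lie algebra of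
derivations. -/
def IsLieCrossedModule.action (hcm : IsLieCrossedModule dt φ) :
    g →ₗ⁅ℝ⁆ LieDerivation ℝ h h where
  toFun x :=
    { toLinearMap := φ x
      leibniz' := fun u v ↦ by rw [hcm.φ_deriv, ← lie_skew (φ x u), add_comm, sub_eq_add_neg] }
  map_add' x y := by
    ext u
    exact LinearMap.congr_fun (map_add φ x y) u
  map_smul' r x := by
    ext u
    exact LinearMap.congr_fun (map_smul φ r x) u
  map_lie' := by
    intro x y
    ext u
    rw [LieDerivation.lie_apply]
    exact hcm.φ_hom x y u

theorem IsLieCrossedModule.hatphiL_eq_descendedAction (hcm : IsLieCrossedModule dt φ)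
    (B₁ : h →ₗ[ℝ] h) (B₀ : g →ₗ[ℝ] g) :
    hatphiL φ B₁ B₀ = descendedAction 1 hcm.action B₁ B₀ := by
  funext x u
  rw [descendedAction, one_smul]
  rfl

theorem IsLieCMRotaBaxter.map_descendedAction {B₁ : h →ₗ[ℝ] h} {B₀ : g →ₗ[ℝ] g}
    (hrb : IsLieCMRotaBaxter dt φ B₁ B₀) (hcm : IsLieCrossedModule dt φ) (x : g) (u : h) :
    B₁ (descendedAction 1 hcm.action B₁ B₀ x u) = hcm.action (B₀ x) (B₁ u) := by
  rw [← hcm.hatphiL_eq_descendedAction]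
  exact (hrb.compat x u).symm

end CrossedModule

theorem stmt15 {h g : Type*}
    [LieRing h] [LieAlgebra ℝ h] [LieRing g] [LieAlgebra ℝ g]
    (dt : h →ₗ[ℝ] g) (φ : g →ₗ[ℝ] Module.End ℝ h)
    (hcm : IsLieCrossedModule dt φ) (B₁ : h →ₗ[ℝ] h) (B₀ : g →ₗ[ℝ] g)
    (hrb : IsLieCMRotaBaxter dt φ B₁ B₀) :
    -- (1) φ̂ is a Lie algebra homomorphism from (g, [·,·]_{B₀})
    (∀ (x y : g) (u : h),
      hatphiL φ B₁ B₀ (brB B₀ x y) u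
        = hatphiL φ B₁ B₀ x (hatphiL φ B₁ B₀ y u)
          - hatphiL φ B₁ B₀ y (hatphiL φ B₁ B₀ x u)) ∧
    -- (2) each φ̂(x) is a derivation of [·,·]_{B₁}
    (∀ (x : g) (u v : h),
      hatphiL φ B₁ B₀ x (brB B₁ u v)
        = brB B₁ (hatphiL φ B₁ B₀ x u) v + brB B₁ u (hatphiL φ B₁ B₀ x v)) := by
  rw [brB_eq_descendedBracket, brB_eq_descendedBracket, hcm.hatphiL_eq_descendedAction]
  exact stmt15_general hrb.rb₁.isRotaBaxter hrb.rb₀.isRotaBaxter (hrb.map_descendedAction hcm)
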